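/- arXiv:math/0211320 — 15 statements merged into one kernel-verified Lean document; each statement's English description precedes it below -/
import Mathlib

section
/- Let ⊥ be a 2-form between complete lattices L and R, ⊥' a 2-form between complete lattices L' and R', and (f,g) an orthomorphism from ⊥ to ⊥'. If g is surjective then g(x^⊥) = (f x)^⊥ for all x ∈ L. If moreover f(⊤) = ⊤ and ⊥ is dense on the right, then ⊥' is dense on the right. If in addition g is dense (g y = ⊥ implies y = ⊥), then ⊥ is dense on the right if and only if ⊥' is dense on the right. -/
/-!
Since `g` is surjective, the elements of `R'` orthogonal to `f x` are exactly the images under `g`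
of the elements orthogonal to `x`; as `g` preserves suprema, it carries `x^⊥` to `(f x)^⊥`.
For density, `f ⊤ = ⊤` turns `⊤ ⊥' g y` into `⊤ ⊥ y`, and `g ⊥ = ⊥` (the empty supremum)
transfers density forward, while density of `g` transfers it back.
-/

def rorth {L R : Type*} [CompleteLattice L] [CompleteLattice R]
    (perp : L → R → Prop) (x : L) : R :=
  sSup {y | perp x y}

theorem stmt_3 {L R L' R' : Type*} [CompleteLattice L] [CompleteLattice R]
    [CompleteLattice L'] [CompleteLattice R']
    (perp : L → R → Prop) (perp' : L' → R' → Prop)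
    (hL : ∀ (X : Set L) (y : R), perp (sSup X) y ↔ ∀ x ∈ X, perp x y)
    (hR : ∀ (x : L) (Y : Set R), perp x (sSup Y) ↔ ∀ y ∈ Y, perp x y)
    (hL' : ∀ (X : Set L') (y : R'), perp' (sSup X) y ↔ ∀ x ∈ X, perp' x y)
    (hR' : ∀ (x : L') (Y : Set R'), perp' x (sSup Y) ↔ ∀ y ∈ Y, perp' x y)
    (f : L → L') (g : R → R')
    (hf : ∀ X : Set L, f (sSup X) = ⨆ x ∈ X, f x)
    (hg : ∀ Y : Set R, g (sSup Y) = ⨆ y ∈ Y, g y)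
    (horth : ∀ (x : L) (y : R), perp' (f x) (g y) ↔ perp x y)
    (hgsurj : Function.Surjective g) :
    (∀ x : L, g (rorth perp x) = rorth perp' (f x)) ∧
    (f ⊤ = ⊤ → (∀ y : R, perp ⊤ y → y = ⊥) → ∀ y' : R', perp' ⊤ y' → y' = ⊥) ∧
    (f ⊤ = ⊤ → (∀ y : R, g y = ⊥ → y = ⊥) →
      ((∀ y : R, perp ⊤ y → y = ⊥) ↔ (∀ y' : R', perp' ⊤ y' → y' = ⊥))) := by
  have hbot : g ⊥ = ⊥ := by simpa using hg ∅
  have hdense : f ⊤ = ⊤ → (∀ y : R, perp ⊤ y → y = ⊥) → ∀ y' : R', perp' ⊤ y' → y' = ⊥ := by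
    intro htop hd y' hy'
    obtain ⟨y, rfl⟩ := hgsurj y'
    rw [← htop, horth] at hy'
    rw [hd y hy', hbot]
  refine ⟨fun x => ?_, hdense, fun htop hgd => ⟨hdense htop, fun hd y hy => ?_⟩⟩
  · have himage : g '' {y | perp x y} = {y' | perp' (f x) y'} := by
      ext y'
      obtain ⟨y, rfl⟩ := hgsurj y'
      constructor
      · rintro ⟨z, hz, hzy⟩
        exact hzy ▸ (horth x z).2 hz
      · exact fun h => ⟨y, (horth x y).1 h, rfl⟩
    rw [rorth, rorth, hg, ← sSup_image, himage]
  · exact hgd y (hd (g y) (htop ▸ (horth ⊤ y).2 hy))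
end

section
/- Let ⊥ be a 2-form between complete lattices L and R, ⊥' a 2-form between complete lattices L' and R', and (f,g) an orthomorphism from ⊥ to ⊥'. If g is surjective and ⊥ is faithful on the left, then f is an order embedding: f x ≤ f z if and only if x ≤ z, for all x, z ∈ L. Dually, if f is surjective and ⊥ is faithful on the right, then g is an order embedding. -/
/-!
If `f x ≤ f z`, then everything orthogonal to `z` is orthogonal to `x`: transport `z ⊥ y` along the
orthomorphism, use that a 2-form is antitone in its left variable, and transport back. Hence `x ⊔ z`
and `z` are orthogonal to the same elements, so faithfulness gives `x ⊔ z = z`. Conversely `f` is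
monotone since it preserves joins. The claim for `g` is the same argument for the opposite 2-form
`fun y x ↦ x ⊥ y`.
-/

lemma perp_sup_left {L R : Type*} [CompleteLattice L] {perp : L → R → Prop}
    (hL : ∀ (X : Set L) (y : R), perp (sSup X) y ↔ ∀ x ∈ X, perp x y) (a b : L) (y : R) :
    perp (a ⊔ b) y ↔ perp a y ∧ perp b y := by
  simpa [sSup_pair] using hL {a, b} y

/-- The left component of an orthomorphism out of a 2-form that is faithful on the left is an order
embedding. Only the left halves of the 2-form axioms matter, so no order is needed on the right;
surjectivity of `g` is not needed either, because only elements `g y` are tested against `f x`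
and `f z`. -/
lemma le_iff_le_of_faithful_left {L R L' R' : Type*} [CompleteLattice L] [CompleteLattice L']
    {perp : L → R → Prop} {perp' : L' → R' → Prop}
    (hL : ∀ (X : Set L) (y : R), perp (sSup X) y ↔ ∀ x ∈ X, perp x y)
    (hL' : ∀ (X : Set L') (y : R'), perp' (sSup X) y ↔ ∀ x ∈ X, perp' x y)
    {f : L → L'} {g : R → R'}
    (hf : ∀ X : Set L, f (sSup X) = ⨆ x ∈ X, f x)
    (horth : ∀ (x : L) (y : R), perp' (f x) (g y) ↔ perp x y)
    (hfaith : ∀ x x' : L, (∀ z : R, perp x z ↔ perp x' z) → x = x') (x z : L) :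
    f x ≤ f z ↔ x ≤ z := by
  constructor
  · intro h
    refine sup_eq_right.mp (hfaith _ _ fun y ↦ ?_)
    rw [perp_sup_left hL, and_iff_right_iff_imp, ← horth, ← horth]
    intro hz
    rw [← sup_eq_right.mpr h, perp_sup_left hL'] at hz
    exact hz.1
  · intro h
    have hsup : f (x ⊔ z) = f x ⊔ f z := by
      rw [← sSup_pair, hf, iSup_pair]
    rw [sup_eq_right.mpr h] at hsup
    exact sup_eq_right.mp hsup.symm


theorem stmt_4 {L R L' R' : Type*} [CompleteLattice L] [CompleteLattice R]
    [CompleteLattice L'] [CompleteLattice R']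
    (perp : L → R → Prop) (perp' : L' → R' → Prop)
    (hL : ∀ (X : Set L) (y : R), perp (sSup X) y ↔ ∀ x ∈ X, perp x y)
    (hR : ∀ (x : L) (Y : Set R), perp x (sSup Y) ↔ ∀ y ∈ Y, perp x y)
    (hL' : ∀ (X : Set L') (y : R'), perp' (sSup X) y ↔ ∀ x ∈ X, perp' x y)
    (hR' : ∀ (x : L') (Y : Set R'), perp' x (sSup Y) ↔ ∀ y ∈ Y, perp' x y)
    (f : L → L') (g : R → R')
    (hf : ∀ X : Set L, f (sSup X) = ⨆ x ∈ X, f x)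
    (hg : ∀ Y : Set R, g (sSup Y) = ⨆ y ∈ Y, g y)
    (horth : ∀ (x : L) (y : R), perp' (f x) (g y) ↔ perp x y) :
    (Function.Surjective g →
      (∀ x x' : L, (∀ z : R, perp x z ↔ perp x' z) → x = x') →
      ∀ x z : L, f x ≤ f z ↔ x ≤ z) ∧
    (Function.Surjective f →
      (∀ y y' : R, (∀ z : L, perp z y ↔ perp z y') → y = y') →
      ∀ y z : R, g y ≤ g z ↔ y ≤ z) := by
  exact ⟨fun _ hfaith ↦ le_iff_le_of_faithful_left hL hL' hf horth hfaith,
    fun _ hfaith ↦ le_iff_le_of_faithful_left (perp := fun y x ↦ perp x y)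
      (perp' := fun y x ↦ perp' x y) (fun Y x ↦ hR x Y) (fun Y x ↦ hR' x Y) hg
      (fun y x ↦ horth x y) hfaith⟩
end

section
/- Let ⊥ be a 2-form between complete lattices L and R, and define j : L → L by j x = ⊥(x^⊥) and k : R → R by k y = (⊥y)^⊥. Then: (1) x ⊥ y iff j x ⊥ k y, for all x ∈ L, y ∈ R (so (j,k) is an orthomorphism onto the restricted form); (2) the restriction of ⊥ to the sets L' = {x ∈ L | j x = x} and R' = {y ∈ R | k y = y} is a 2-form with respect to the complete-lattice structures on L' and R' in which the supremum of X ⊆ L' is j(sSup X) and the supremum of Y ⊆ R' is k(sSup Y); that is, j(sSup X) ⊥ y iff x ⊥ y for all x ∈ X, and x ⊥ k(sSup Y) iff x ⊥ y for all y ∈ Y; (3) this restricted 2-form is faithful. -/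
def lorth {L R : Type*} [CompleteLattice L] [CompleteLattice R]
    (perp : L → R → Prop) (y : R) : L :=
  sSup {x | perp x y}

section

variable {L R : Type*} [CompleteLattice L] [CompleteLattice R] {perp : L → R → Prop}

theorem perp_iff_le_rorth
    (hR : ∀ (x : L) (Y : Set R), perp x (sSup Y) ↔ ∀ y ∈ Y, perp x y) (x : L) (y : R) :
    perp x y ↔ y ≤ rorth perp x := by
  refine ⟨fun h => le_sSup h, fun h => ?_⟩
  have h1 : perp x (rorth perp x) := (hR x _).2 fun _ hy => hy
  -- Downward closure of `perp x` comes from writing `rorth perp x` as the supremum of a pair.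
  have h2 : sSup {y, rorth perp x} = rorth perp x := by rw [sSup_pair, sup_eq_right.2 h]
  rw [← h2, hR] at h1
  exact h1 y (Set.mem_insert _ _)

theorem perp_iff_le_lorth
    (hL : ∀ (X : Set L) (y : R), perp (sSup X) y ↔ ∀ x ∈ X, perp x y) (x : L) (y : R) :
    perp x y ↔ x ≤ lorth perp y :=
  perp_iff_le_rorth (perp := fun y x => perp x y) (fun y X => hL X y) y x

theorem perp_closure_left
    (hL : ∀ (X : Set L) (y : R), perp (sSup X) y ↔ ∀ x ∈ X, perp x y)
    (hR : ∀ (x : L) (Y : Set R), perp x (sSup Y) ↔ ∀ y ∈ Y, perp x y) (x : L) (y : R) :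
    perp (lorth perp (rorth perp x)) y ↔ perp x y := by
  have hl := perp_iff_le_lorth hL
  have hr := perp_iff_le_rorth hR
  constructor
  · intro h
    have hx : x ≤ lorth perp (rorth perp x) := (hl _ _).1 ((hr _ _).2 le_rfl)
    exact (hl _ _).2 (hx.trans ((hl _ _).1 h))
  · intro h
    have h1 : perp (lorth perp (rorth perp x)) (rorth perp x) := (hl _ _).2 le_rfl
    exact (hr _ _).2 (((hr _ _).1 h).trans ((hr _ _).1 h1))

theorem perp_closure_right
    (hL : ∀ (X : Set L) (y : R), perp (sSup X) y ↔ ∀ x ∈ X, perp x y)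
    (hR : ∀ (x : L) (Y : Set R), perp x (sSup Y) ↔ ∀ y ∈ Y, perp x y) (x : L) (y : R) :
    perp x (rorth perp (lorth perp y)) ↔ perp x y :=
  perp_closure_left (perp := fun y x => perp x y) (fun Y x => hR x Y) (fun y X => hL X y) y x

end

theorem stmt_5 {L R : Type*} [CompleteLattice L] [CompleteLattice R]
    (perp : L → R → Prop)
    (hL : ∀ (X : Set L) (y : R), perp (sSup X) y ↔ ∀ x ∈ X, perp x y)
    (hR : ∀ (x : L) (Y : Set R), perp x (sSup Y) ↔ ∀ y ∈ Y, perp x y)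
    (j : L → L) (k : R → R)
    (hj : ∀ x : L, j x = lorth perp (rorth perp x))
    (hk : ∀ y : R, k y = rorth perp (lorth perp y)) :
    (∀ (x : L) (y : R), perp x y ↔ perp (j x) (k y)) ∧
    (∀ (X : Set L) (y : R), (∀ x ∈ X, j x = x) → k y = y →
      (perp (j (sSup X)) y ↔ ∀ x ∈ X, perp x y)) ∧
    (∀ (x : L) (Y : Set R), j x = x → (∀ y ∈ Y, k y = y) →
      (perp x (k (sSup Y)) ↔ ∀ y ∈ Y, perp x y)) ∧
    (∀ y y' : R, k y = y → k y' = y' →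
      (∀ z : L, j z = z → (perp z y ↔ perp z y')) → y = y') ∧
    (∀ x x' : L, j x = x → j x' = x' →
      (∀ z : R, k z = z → (perp x z ↔ perp x' z)) → x = x') := by
  have pj : ∀ x y, perp (j x) y ↔ perp x y := fun x y => by
    rw [hj]; exact perp_closure_left hL hR x y
  have pk : ∀ x y, perp x (k y) ↔ perp x y := fun x y => by
    rw [hk]; exact perp_closure_right hL hR x y
  -- Both closures depend only on the orthogonality relations of their argument.
  have jcongr : ∀ x x', (∀ y, perp x y ↔ perp x' y) → j x = j x' := fun x x' h => by
    rw [hj, hj]; simp only [rorth, h]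
  have kcongr : ∀ y y', (∀ x, perp x y ↔ perp x y') → k y = k y' := fun y y' h => by
    rw [hk, hk]; simp only [lorth, h]
  refine ⟨fun x y => by rw [pj, pk], fun X y _ _ => by rw [pj, hL],
    fun x Y _ _ => by rw [pk, hR], fun y y' hy hy' h => ?_, fun x x' hx hx' h => ?_⟩
  · rw [← hy, ← hy']
    refine kcongr y y' fun z => ?_
    rw [← pj z y, ← pj z y']
    exact h (j z) (jcongr _ _ (pj z))
  · rw [← hx, ← hx']
    refine jcongr x x' fun z => ?_
    rw [← pk x z, ← pk x' z]
    exact h (k z) (kcongr _ _ fun w => pk w z)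
end

section
/- Let ⊥ be a 2-form between complete lattices L and R, ⊥' a 2-form between complete lattices L' and R', and f : L → L', g : R' → R sSup-preserving maps. Define the right adjoints f_* : L' → L by f_*(x') = sSup {x ∈ L | f x ≤ x'} and g_* : R → R' by g_*(y) = sSup {z ∈ R' | g z ≤ y}. Then the following are equivalent: (i) (f,g) is continuous, i.e., f x ⊥' y iff x ⊥ g y for all x ∈ L, y ∈ R'; (ii) g_*(x^⊥) = (f x)^⊥ for all x ∈ L; (iii) f_*(⊥y) = ⊥(g y) for all y ∈ R'. -/
/-- The right orthogonal image represents `perp x`: it is the largest `y` with `perp x y`,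
and `perp x` is a lower set because it is compatible with suprema. -/
theorem le_rorth_iff {L R : Type*} [CompleteLattice L] [CompleteLattice R]
    {perp : L → R → Prop}
    (hR : ∀ (x : L) (Y : Set R), perp x (sSup Y) ↔ ∀ y ∈ Y, perp x y) (x : L) (y : R) :
    y ≤ rorth perp x ↔ perp x y := by
  refine ⟨fun h => ?_, fun h => le_sSup h⟩
  have h1 : perp x (sSup (insert y {y | perp x y})) := by
    rw [sSup_insert, sup_eq_right.2 (show y ≤ sSup {y | perp x y} from h)]
    exact (hR x _).2 fun _ hy => hy
  exact (hR x _).1 h1 y (Set.mem_insert _ _)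

theorem le_lorth_iff {L R : Type*} [CompleteLattice L] [CompleteLattice R]
    {perp : L → R → Prop}
    (hL : ∀ (X : Set L) (y : R), perp (sSup X) y ↔ ∀ x ∈ X, perp x y) (x : L) (y : R) :
    x ≤ lorth perp y ↔ perp x y :=
  le_rorth_iff (perp := fun y x => perp x y) (fun y X => hL X y) y x

theorem eq_iff_forall_le_iff_le {A : Type*} [PartialOrder A] (a b : A) :
    a = b ↔ ∀ z, z ≤ a ↔ z ≤ b :=
  ⟨fun h _ => h ▸ Iff.rfl, eq_of_forall_le_iff⟩

/-- The adjoint functor theorem for complete lattices. -/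
theorem gc_of_map_sSup {A B : Type*} [CompleteLattice A] [CompleteLattice B]
    {f : A → B} (hf : ∀ X : Set A, f (sSup X) = ⨆ x ∈ X, f x) {u : B → A}
    (hu : ∀ b, u b = sSup {a | f a ≤ b}) : GaloisConnection f u := by
  have hmono : Monotone f := fun a b hab => by
    have h := hf {a, b}
    rw [sSup_pair, sup_eq_right.2 hab] at h
    rw [h]
    exact le_iSup₂_of_le a (Set.mem_insert _ _) le_rfl
  intro a b
  refine ⟨fun h => (hu b).symm ▸ le_sSup h, fun h => (hmono h).trans ?_⟩
  rw [hu, hf]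
  exact iSup₂_le fun _ hx => hx

theorem stmt_6 {L R L' R' : Type*} [CompleteLattice L] [CompleteLattice R]
    [CompleteLattice L'] [CompleteLattice R']
    (perp : L → R → Prop) (perp' : L' → R' → Prop)
    (hL : ∀ (X : Set L) (y : R), perp (sSup X) y ↔ ∀ x ∈ X, perp x y)
    (hR : ∀ (x : L) (Y : Set R), perp x (sSup Y) ↔ ∀ y ∈ Y, perp x y)
    (hL' : ∀ (X : Set L') (y : R'), perp' (sSup X) y ↔ ∀ x ∈ X, perp' x y)
    (hR' : ∀ (x : L') (Y : Set R'), perp' x (sSup Y) ↔ ∀ y ∈ Y, perp' x y)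
    (f : L → L') (g : R' → R)
    (hf : ∀ X : Set L, f (sSup X) = ⨆ x ∈ X, f x)
    (hg : ∀ Y : Set R', g (sSup Y) = ⨆ y ∈ Y, g y)
    (fs : L' → L) (gs : R → R')
    (hfs : ∀ x' : L', fs x' = sSup {x : L | f x ≤ x'})
    (hgs : ∀ y : R, gs y = sSup {z : R' | g z ≤ y}) :
    ((∀ (x : L) (y : R'), perp' (f x) y ↔ perp x (g y)) ↔
      ∀ x : L, gs (rorth perp x) = rorth perp' (f x)) ∧
    ((∀ (x : L) (y : R'), perp' (f x) y ↔ perp x (g y)) ↔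
      ∀ y : R', fs (lorth perp' y) = lorth perp (g y)) := by
  have gcf := gc_of_map_sSup hf hfs
  have gcg := gc_of_map_sSup hg hgs
  refine ⟨forall_congr' fun x => ?_, forall_comm.trans (forall_congr' fun y => ?_)⟩
  · rw [eq_iff_forall_le_iff_le]
    refine forall_congr' fun z => ?_
    rw [← gcg z, le_rorth_iff hR, le_rorth_iff hR']
    exact iff_comm
  · rw [eq_iff_forall_le_iff_le]
    refine forall_congr' fun z => ?_
    rw [← gcf z, le_lorth_iff hL, le_lorth_iff hL']
end

section
/- Let ⊥ be a 2-form between complete lattices L and R and ⊥' a 2-form between complete lattices L' and R', both faithful on the right, and let f : L → L' be a sSup-preserving map. Then there exists a sSup-preserving map g : R' → R such that (f,g) is continuous (f x ⊥' y iff x ⊥ g y for all x, y) if and only if f(⊥(x^⊥)) ≤ ⊥'((f x)^⊥) for all x ∈ L. If in addition ⊥ is faithful on the left, then there is exactly one such g. -/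
theorem stmt_7 {L R L' R' : Type*} [CompleteLattice L] [CompleteLattice R]
    [CompleteLattice L'] [CompleteLattice R']
    (perp : L → R → Prop) (perp' : L' → R' → Prop)
    (hL : ∀ (X : Set L) (y : R), perp (sSup X) y ↔ ∀ x ∈ X, perp x y)
    (hR : ∀ (x : L) (Y : Set R), perp x (sSup Y) ↔ ∀ y ∈ Y, perp x y)
    (hL' : ∀ (X : Set L') (y : R'), perp' (sSup X) y ↔ ∀ x ∈ X, perp' x y)
    (hR' : ∀ (x : L') (Y : Set R'), perp' x (sSup Y) ↔ ∀ y ∈ Y, perp' x y)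
    (hfr : ∀ y y' : R, (∀ z : L, perp z y ↔ perp z y') → y = y')
    (hfr' : ∀ y y' : R', (∀ z : L', perp' z y ↔ perp' z y') → y = y')
    (f : L → L')
    (hf : ∀ X : Set L, f (sSup X) = ⨆ x ∈ X, f x) :
    ((∃ g : R' → R, (∀ Y : Set R', g (sSup Y) = ⨆ y ∈ Y, g y) ∧
        ∀ (x : L) (y : R'), perp' (f x) y ↔ perp x (g y)) ↔
      ∀ x : L, f (lorth perp (rorth perp x)) ≤ lorth perp' (rorth perp' (f x))) ∧
    ((∀ x x' : L, (∀ z : R, perp x z ↔ perp x' z) → x = x') →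
      ∃! g : R' → R, (∀ Y : Set R', g (sSup Y) = ⨆ y ∈ Y, g y) ∧
        ∀ (x : L) (y : R'), perp' (f x) y ↔ perp x (g y)) := by
  have l := perp_iff_le_lorth hL
  have r := perp_iff_le_rorth hR
  have l' := perp_iff_le_lorth hL'
  have r' := perp_iff_le_rorth hR'
  have fmono : Monotone f := fun a b hab => by
    have h := hf {a, b}
    rw [sSup_pair, sup_eq_right.2 hab, iSup_pair] at h
    rw [h]
    exact le_sup_left
  have gsup : ∀ g : R' → R, (∀ (x : L) (y : R'), perp' (f x) y ↔ perp x (g y)) →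
      ∀ Y : Set R', g (sSup Y) = ⨆ y ∈ Y, g y := fun g hg Y => by
    refine hfr _ _ fun z => ?_
    rw [← hg, hR', ← sSup_image, hR, Set.forall_mem_image]
    simp only [hg]
  have key : (∀ x : L, f (lorth perp (rorth perp x)) ≤ lorth perp' (rorth perp' (f x))) →
      ∃ g : R' → R, (∀ Y : Set R', g (sSup Y) = ⨆ y ∈ Y, g y) ∧
        ∀ (x : L) (y : R'), perp' (f x) y ↔ perp x (g y) := by
    intro h
    have hg : ∀ (x : L) (y : R'),
        perp' (f x) y ↔ perp x (rorth perp (sSup {x | perp' (f x) y})) := by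
      intro x y
      have h0 : perp' (f (sSup {x | perp' (f x) y})) y := by
        rw [hf, ← sSup_image, hL', Set.forall_mem_image]
        exact fun _ hx => hx
      constructor
      · intro hx
        have hx₀ : x ≤ sSup {x | perp' (f x) y} := le_sSup hx
        exact (l _ _).2 (hx₀.trans ((l _ _).1 ((r _ _).2 le_rfl)))
      · intro hx
        have h1 := (fmono ((l _ _).1 hx)).trans (h _)
        exact (r' _ _).2 (((r' _ _).1 h0).trans ((r' _ _).1 ((l' _ _).2 h1)))
    exact ⟨_, gsup _ hg, hg⟩
  refine ⟨⟨?_, key⟩, fun hfl => ?_⟩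
  · rintro ⟨g, -, hg⟩ x
    have h1 : g (rorth perp' (f x)) ≤ rorth perp x :=
      (r _ _).1 ((hg _ _).1 ((r' _ _).2 le_rfl))
    refine (l' _ _).1 ((hg _ _).2 ((r _ _).2 (h1.trans ?_)))
    exact (r _ _).1 ((l _ _).2 le_rfl)
  · obtain ⟨g, hs, hg⟩ := key fun x => by
      have hx : lorth perp (rorth perp x) = x := by
        refine hfl _ _ fun z => ⟨fun hz => ?_, fun hz => ?_⟩
        · exact (l _ _).2 (((l _ _).1 ((r _ _).2 le_rfl)).trans ((l _ _).1 hz))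
        · exact (r _ _).2 (((r _ _).1 hz).trans ((r _ _).1 ((l _ _).2 le_rfl)))
      rw [hx]
      exact (l' _ _).1 ((r' _ _).2 le_rfl)
    refine ⟨g, ⟨hs, hg⟩, fun g₂ hg₂ => funext fun y => hfr _ _ fun z => ?_⟩
    rw [← hg, hg₂.2]
end

section
/- Let Q be a quantale, M a left Q-module, and m ∈ M. The following are equivalent: (1) a • (x ⊔ m) ≤ (a • x) ⊔ m for all a ∈ Q and x ∈ M (i.e., x ↦ x ⊔ m is a nucleus of left Q-modules, so the upper segment ↑m is a left Q-module quotient of M); (2) a • x ≤ m for all a ∈ Q and all x ≤ m (i.e., the lower segment ↓m is a left Q-submodule of M); (3) m is invariant, i.e., ⊤ • m ≤ m. -/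
/-!
Preservation of suprema makes the action monotone in each variable, with `a • ⊥ = ⊥` and
`a • (x ⊔ y) = a • x ⊔ a • y`. Hence `⊤ • m ≤ m` is equivalent to `a • m ≤ m` for all `a`, and gives
`a • (x ⊔ m) = a • x ⊔ a • m ≤ a • x ⊔ m` as well as `a • x ≤ a • m ≤ m` for `x ≤ m`. Conversely,
invariance is the first condition at `a = ⊤`, `x = ⊥`, and the second at `a = ⊤`, `x = m`.
-/

theorem stmt_9 {Q M : Type*} [CompleteLattice Q] [CompleteLattice M]
    (mul : Q → Q → Q)
    (hmul_assoc : ∀ a b c : Q, mul (mul a b) c = mul a (mul b c))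
    (hmul_supl : ∀ (A : Set Q) (b : Q), mul (sSup A) b = ⨆ a ∈ A, mul a b)
    (hmul_supr : ∀ (a : Q) (B : Set Q), mul a (sSup B) = ⨆ b ∈ B, mul a b)
    (smul : Q → M → M)
    (hact_supl : ∀ (A : Set Q) (x : M), smul (sSup A) x = ⨆ a ∈ A, smul a x)
    (hact_supr : ∀ (a : Q) (X : Set M), smul a (sSup X) = ⨆ x ∈ X, smul a x)
    (hact_assoc : ∀ (a b : Q) (x : M), smul (mul a b) x = smul a (smul b x))
    (m : M) :
    ((∀ (a : Q) (x : M), smul a (x ⊔ m) ≤ smul a x ⊔ m) ↔ smul ⊤ m ≤ m) ∧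
    ((∀ (a : Q) (x : M), x ≤ m → smul a x ≤ m) ↔ smul ⊤ m ≤ m) := by
  have h_bot : ∀ a, smul a ⊥ = ⊥ := fun a => by simpa using hact_supr a ∅
  have h_sup : ∀ a x y, smul a (x ⊔ y) = smul a x ⊔ smul a y := fun a x y => by
    simpa only [sSup_pair, iSup_pair] using hact_supr a {x, y}
  have h_top : ∀ a x, smul a x ≤ smul ⊤ x := fun a x => by
    have h := hact_supl {a, ⊤} x
    rw [sSup_pair, iSup_pair, sup_top_eq] at h
    exact h ▸ le_sup_left
  refine ⟨⟨fun h => ?_, fun h a x => ?_⟩, ⟨fun h => h ⊤ m le_rfl, fun h a x hx => ?_⟩⟩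
  · simpa [h_bot] using h ⊤ ⊥
  · rw [h_sup]
    exact sup_le_sup_left ((h_top a m).trans h) _
  · have hmono : smul a x ≤ smul a m := by
      rw [← sup_eq_right.mpr hx, h_sup]
      exact le_sup_left
    exact hmono.trans ((h_top a m).trans h)
end

section
/- Let Q be a quantale, M a left Q-module, and x ∈ M. Define m/x = sSup {a ∈ Q | a • x ≤ m} for m ∈ M. Then: (1) if a ∈ Q is left-sided (⊤ * a ≤ a) then a • x is invariant (⊤ • (a • x) ≤ a • x); (2) if m ∈ M is invariant then m/x is left-sided; (3) if moreover x is a generator of M (every element of M is of the form a • x for some a ∈ Q), then m is invariant if and only if m/x is left-sided. -/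
/-!
The residual `m/x = sSup {a | a • x ≤ m}` satisfies `(m/x) • x ≤ m`, because the action preserves
suprema in its first argument. Hence `a ≤ m/x` exactly when `a • x ≤ m`, and the identity
`(⊤ * (m/x)) • x = ⊤ • ((m/x) • x)` compares left-sidedness of `m/x` with invariance of `m`.
If `x` is a generator, then `(m/x) • x = m`, so the converse in the last part is an instance of the
first part.
-/

theorem stmt_10 {Q M : Type*} [CompleteLattice Q] [CompleteLattice M]
    (mul : Q → Q → Q)
    (hmul_assoc : ∀ a b c : Q, mul (mul a b) c = mul a (mul b c))
    (hmul_supl : ∀ (A : Set Q) (b : Q), mul (sSup A) b = ⨆ a ∈ A, mul a b)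
    (hmul_supr : ∀ (a : Q) (B : Set Q), mul a (sSup B) = ⨆ b ∈ B, mul a b)
    (smul : Q → M → M)
    (hact_supl : ∀ (A : Set Q) (x : M), smul (sSup A) x = ⨆ a ∈ A, smul a x)
    (hact_supr : ∀ (a : Q) (X : Set M), smul a (sSup X) = ⨆ x ∈ X, smul a x)
    (hact_assoc : ∀ (a b : Q) (x : M), smul (mul a b) x = smul a (smul b x))
    (x : M) :
    (∀ a : Q, mul ⊤ a ≤ a → smul ⊤ (smul a x) ≤ smul a x) ∧
    (∀ m : M, smul ⊤ m ≤ m →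
      mul ⊤ (sSup {a : Q | smul a x ≤ m}) ≤ sSup {a : Q | smul a x ≤ m}) ∧
    ((∀ m : M, ∃ a : Q, smul a x = m) →
      ∀ m : M, (smul ⊤ m ≤ m ↔
        mul ⊤ (sSup {a : Q | smul a x ≤ m}) ≤ sSup {a : Q | smul a x ≤ m})) := by
  have mono_left : ∀ {a b : Q} (y : M), a ≤ b → smul a y ≤ smul b y := by
    intro a b y hab
    have h := hact_supl {a, b} y
    rw [sSup_pair, sup_eq_right.mpr hab, iSup_pair] at h
    exact h ▸ le_sup_left
  have mono_right : ∀ (a : Q) {y z : M}, y ≤ z → smul a y ≤ smul a z := by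
    intro a y z hyz
    have h := hact_supr a {y, z}
    rw [sSup_pair, sup_eq_right.mpr hyz, iSup_pair] at h
    exact h ▸ le_sup_left
  have residual_smul_le : ∀ m : M, smul (sSup {a : Q | smul a x ≤ m}) x ≤ m := by
    intro m
    rw [hact_supl]
    exact iSup₂_le fun a ha => ha
  have invariant_smul : ∀ a : Q, mul ⊤ a ≤ a → smul ⊤ (smul a x) ≤ smul a x := by
    intro a ha
    rw [← hact_assoc]
    exact mono_left x ha
  have leftSided_residual : ∀ m : M, smul ⊤ m ≤ m →
      mul ⊤ (sSup {a : Q | smul a x ≤ m}) ≤ sSup {a : Q | smul a x ≤ m} := by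
    intro m hm
    apply le_sSup
    rw [Set.mem_ofPred_eq, hact_assoc]
    exact (mono_right ⊤ (residual_smul_le m)).trans hm
  refine ⟨invariant_smul, leftSided_residual, fun hgen m => ⟨leftSided_residual m, fun h => ?_⟩⟩
  have residual_smul_eq : smul (sSup {a : Q | smul a x ≤ m}) x = m := by
    obtain ⟨a, ha⟩ := hgen m
    refine le_antisymm (residual_smul_le m) ?_
    calc m = smul a x := ha.symm
      _ ≤ smul (sSup {a : Q | smul a x ≤ m}) x := mono_left x (le_sSup ha.le)
  have hinv := invariant_smul _ h
  rwa [residual_smul_eq] at hinv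
end

section
/- Let Q be a quantale, M a left Q-module, and x ∈ M a generator. Define m/x = sSup {a ∈ Q | a • x ≤ m} and ann(x) = sSup {a ∈ Q | a • x = ⊥}. Then: (1) (a ⊔ ann(x)) • x = a • x for all a ∈ Q; (2) for every a ∈ Q with ann(x) ≤ a, if a • x = ⊥ then a = ann(x) (the induced homomorphism from ↑ann(x) onto M is dense); (3) (m/x) • x = m for all m ∈ M, and the map m ↦ m/x is an order embedding of M into Q (m ≤ m' iff m/x ≤ m'/x). -/
/-!
Since `a ↦ a • x` preserves suprema, it is monotone and `m ↦ m/x` is its right adjoint; the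
annihilator of `x` is itself sent to `⊥`, so joining with it does not change `a • x`, and it is
the largest such element. A generator makes `a ↦ a • x` surjective, hence `(m/x) • x = m`, and
`m ↦ m/x` is a monotone map with a monotone left inverse, i.e. an order embedding.
-/


theorem stmt_11 {Q M : Type*} [CompleteLattice Q] [CompleteLattice M]
    (mul : Q → Q → Q)
    (hmul_assoc : ∀ a b c : Q, mul (mul a b) c = mul a (mul b c))
    (hmul_supl : ∀ (A : Set Q) (b : Q), mul (sSup A) b = ⨆ a ∈ A, mul a b)
    (hmul_supr : ∀ (a : Q) (B : Set Q), mul a (sSup B) = ⨆ b ∈ B, mul a b)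
    (smul : Q → M → M)
    (hact_supl : ∀ (A : Set Q) (x : M), smul (sSup A) x = ⨆ a ∈ A, smul a x)
    (hact_supr : ∀ (a : Q) (X : Set M), smul a (sSup X) = ⨆ x ∈ X, smul a x)
    (hact_assoc : ∀ (a b : Q) (x : M), smul (mul a b) x = smul a (smul b x))
    (x : M)
    (hgen : ∀ m : M, ∃ a : Q, smul a x = m) :
    (∀ a : Q, smul (a ⊔ sSup {b : Q | smul b x = ⊥}) x = smul a x) ∧
    (∀ a : Q, sSup {b : Q | smul b x = ⊥} ≤ a → smul a x = ⊥ →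
      a = sSup {b : Q | smul b x = ⊥}) ∧
    (∀ m : M, smul (sSup {a : Q | smul a x ≤ m}) x = m) ∧
    (∀ m m' : M, m ≤ m' ↔
      sSup {a : Q | smul a x ≤ m} ≤ sSup {a : Q | smul a x ≤ m'}) := by
  have hsup : ∀ a b : Q, smul (a ⊔ b) x = smul a x ⊔ smul b x := fun a b => by
    rw [← sSup_pair, hact_supl, iSup_pair]
  have hmono : ∀ a b : Q, a ≤ b → smul a x ≤ smul b x := fun a b h => by
    rw [← sup_eq_right.2 h, hsup]
    exact le_sup_left
  have hann : smul (sSup {b : Q | smul b x = ⊥}) x = ⊥ := by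
    rw [hact_supl]
    exact iSup₂_eq_bot.2 fun _ hb => hb
  have hdiv : ∀ m : M, smul (sSup {a : Q | smul a x ≤ m}) x = m := fun m => by
    apply le_antisymm
    · rw [hact_supl]
      exact iSup₂_le fun _ hb => hb
    · obtain ⟨a, ha⟩ := hgen m
      exact ha.ge.trans (hmono _ _ (le_sSup ha.le))
  refine ⟨fun a => by rw [hsup, hann, sup_bot_eq], fun a h h0 => le_antisymm (le_sSup h0) h,
    hdiv, fun m m' => ⟨fun h => sSup_le_sSup fun _ ha => le_trans ha h, fun h => ?_⟩⟩
  rw [← hdiv m, ← hdiv m']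
  exact hmono _ _ h
end

section
/- Let Q be a quantale and M a left Q-module. If M is everywhere principal, i.e., for every m ∈ M with m ≠ ⊥ there exists a generator x of M with x ≤ m, then M is irreducible: the only invariant elements of M are ⊥ and ⊤. -/
theorem stmt_12 {Q M : Type*} [CompleteLattice Q] [CompleteLattice M]
    (mul : Q → Q → Q)
    (hmul_assoc : ∀ a b c : Q, mul (mul a b) c = mul a (mul b c))
    (hmul_supl : ∀ (A : Set Q) (b : Q), mul (sSup A) b = ⨆ a ∈ A, mul a b)
    (hmul_supr : ∀ (a : Q) (B : Set Q), mul a (sSup B) = ⨆ b ∈ B, mul a b)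
    (smul : Q → M → M)
    (hact_supl : ∀ (A : Set Q) (x : M), smul (sSup A) x = ⨆ a ∈ A, smul a x)
    (hact_supr : ∀ (a : Q) (X : Set M), smul a (sSup X) = ⨆ x ∈ X, smul a x)
    (hact_assoc : ∀ (a b : Q) (x : M), smul (mul a b) x = smul a (smul b x))
    (hep : ∀ m : M, m ≠ ⊥ → ∃ x : M, (∀ n : M, ∃ a : Q, smul a x = n) ∧ x ≤ m) :
    ∀ m : M, smul ⊤ m ≤ m → m = ⊥ ∨ m = ⊤ := by
  intro m hm
  refine or_iff_not_imp_left.mpr fun hne => ?_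
  -- A generator `x ≤ m` with `a • x = ⊤` gives `⊤ = a • x ≤ ⊤ • x ≤ ⊤ • m ≤ m`.
  obtain ⟨x, hx, hxm⟩ := hep m hne
  obtain ⟨a, ha⟩ := hx ⊤
  -- Monotonicity in each variable comes from preservation of suprema of pairs.
  have h1 : smul a x ≤ smul ⊤ x := by
    have h := hact_supl {a, ⊤} x
    rw [sSup_pair, sup_top_eq] at h
    rw [h]
    exact le_biSup (fun b => smul b x) (Set.mem_insert a {⊤})
  have h2 : smul ⊤ x ≤ smul ⊤ m := by
    have h := hact_supr ⊤ {x, m}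
    rw [sSup_pair, sup_eq_right.mpr hxm] at h
    rw [h]
    exact le_biSup (fun y => smul ⊤ y) (Set.mem_insert x {m})
  exact top_le_iff.mp (ha ▸ h1.trans (h2.trans hm))
end

section
/- Let Q be a quantale and M a left Q-module. Suppose M has a generator x such that ann(x) = sSup {a ∈ Q | a • x = ⊥} is a maximal left-sided element of Q, i.e., ann(x) ≠ ⊤ and every left-sided element a ∈ Q with ann(x) ≤ a satisfies a = ann(x) or a = ⊤. Then M is irreducible: the only invariant elements of M are ⊥ and ⊤. -/
/-!
For an invariant `m`, let `a` be the largest element of `Q` with `a • x ≤ m`. As `x` is a generator,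
`a • x = m`, and then `(⊤ * a) • x = ⊤ • m ≤ m` shows that `a` is left-sided. It lies above `ann(x)`,
so by maximality either `a = ann(x)`, whence `m = ann(x) • x = ⊥`, or `a = ⊤`, whence
`m = ⊤ • x = ⊤` because `⊤ • x` dominates every `c • x`.
-/


theorem stmt_13 {Q M : Type*} [CompleteLattice Q] [CompleteLattice M]
    (mul : Q → Q → Q)
    (hmul_assoc : ∀ a b c : Q, mul (mul a b) c = mul a (mul b c))
    (hmul_supl : ∀ (A : Set Q) (b : Q), mul (sSup A) b = ⨆ a ∈ A, mul a b)
    (hmul_supr : ∀ (a : Q) (B : Set Q), mul a (sSup B) = ⨆ b ∈ B, mul a b)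
    (smul : Q → M → M)
    (hact_supl : ∀ (A : Set Q) (x : M), smul (sSup A) x = ⨆ a ∈ A, smul a x)
    (hact_supr : ∀ (a : Q) (X : Set M), smul a (sSup X) = ⨆ x ∈ X, smul a x)
    (hact_assoc : ∀ (a b : Q) (x : M), smul (mul a b) x = smul a (smul b x))
    (x : M)
    (hgen : ∀ m : M, ∃ a : Q, smul a x = m)
    (hne : sSup {a : Q | smul a x = ⊥} ≠ ⊤)
    (hmax : ∀ a : Q, mul ⊤ a ≤ a → sSup {b : Q | smul b x = ⊥} ≤ a →
      a = sSup {b : Q | smul b x = ⊥} ∨ a = ⊤) :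
    ∀ m : M, smul ⊤ m ≤ m → m = ⊥ ∨ m = ⊤ := by
  have le_of : ∀ (m : M), smul (sSup {b : Q | smul b x ≤ m}) x ≤ m := by
    intro m
    rw [hact_supl]
    exact iSup₂_le fun b hb => hb
  have mono : ∀ a b : Q, a ≤ b → smul a x ≤ smul b x := by
    intro a b hab
    -- Monotonicity of the action comes from preservation of the join `a ⊔ b = b`.
    have h := hact_supl {a, b} x
    rw [sSup_pair, sup_eq_right.mpr hab] at h
    rw [h]
    exact le_iSup₂_of_le a (Set.mem_insert a {b}) le_rfl
  intro m hm
  have hax : smul (sSup {b : Q | smul b x ≤ m}) x = m := by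
    refine le_antisymm (le_of m) ?_
    obtain ⟨c, hc⟩ := hgen m
    calc m = smul c x := hc.symm
      _ ≤ _ := mono _ _ (le_sSup hc.le)
  rcases hmax (sSup {b : Q | smul b x ≤ m})
      (le_sSup (by rw [Set.mem_setOf_eq, hact_assoc, hax]; exact hm))
      (sSup_le_sSup fun b (hb : smul b x = ⊥) => hb.le.trans bot_le) with h | h
  · left
    rw [← hax, h, hact_supl, eq_bot_iff]
    exact iSup₂_le fun b hb => le_of_eq hb
  · right
    obtain ⟨c, hc⟩ := hgen ⊤
    rw [← hax, h, eq_top_iff, ← hc]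
    exact mono _ _ le_top
end

section
/- Let Q be a quantale, L a right Q-module, R a left Q-module, and ⊥ a 2-form between L and R. Define a\z = sSup {y ∈ R | a • y ≤ z} for a ∈ Q, z ∈ R, and z/a = sSup {x ∈ L | x • a ≤ z} for z ∈ L. Then the following are equivalent: (1) (x • a)^⊥ = a\(x^⊥) for all x ∈ L and a ∈ Q; (2) ⊥(a • y) = (⊥y)/a for all y ∈ R and a ∈ Q; (3) ⊥ is balanced, i.e., x • a ⊥ y iff x ⊥ a • y for all x ∈ L, y ∈ R, a ∈ Q. -/
/-- A predicate that holds at a supremum exactly when it holds at every member of the set.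
Unlike for `SupClosed`, this forces `P` to be downward closed, by the forward implication. -/
def IsSupPred {α : Type*} [CompleteLattice α] (P : α → Prop) : Prop :=
  ∀ S : Set α, P (sSup S) ↔ ∀ s ∈ S, P s

namespace IsSupPred

variable {α : Type*} [CompleteLattice α] {P T : α → Prop}

/-- `P` is the principal ideal generated by the supremum of its members. -/
theorem iff_le (h : IsSupPred P) (y : α) : P y ↔ y ≤ sSup {z | P z} := by
  refine ⟨fun hy => le_sSup hy, fun hy => ?_⟩
  have htop : P (sSup {z | P z}) := (h _).2 fun _ hz => hz
  -- Downward closure is the defining property applied to the pair `{y, sSup {z | P z}}`.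
  refine (h {y, sSup {z | P z}}).1 ?_ y (by simp)
  rwa [sSup_pair, sup_eq_right.2 hy]

theorem sSup_eq_iff (h : IsSupPred P) (hT : IsSupPred T) :
    sSup {y | P y} = sSup {y | T y} ↔ ∀ y, P y ↔ T y := by
  refine ⟨fun e y => ?_, fun e => by simp only [e]⟩
  rw [h.iff_le, hT.iff_le, e]

end IsSupPred

theorem isSupPred_map_le {α β : Type*} [CompleteLattice α] [CompleteLattice β] {f : α → β}
    (hf : ∀ S : Set α, f (sSup S) = ⨆ s ∈ S, f s) (z : β) : IsSupPred fun y => f y ≤ z := by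
  intro S
  simp only [hf, iSup₂_le_iff]

theorem stmt_14 {Q L R : Type*} [CompleteLattice Q] [CompleteLattice L]
    [CompleteLattice R]
    (mul : Q → Q → Q)
    (hmul_assoc : ∀ a b c : Q, mul (mul a b) c = mul a (mul b c))
    (hmul_supl : ∀ (A : Set Q) (b : Q), mul (sSup A) b = ⨆ a ∈ A, mul a b)
    (hmul_supr : ∀ (a : Q) (B : Set Q), mul a (sSup B) = ⨆ b ∈ B, mul a b)
    (actL : L → Q → L)
    (hactL_supl : ∀ (X : Set L) (a : Q), actL (sSup X) a = ⨆ x ∈ X, actL x a)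
    (hactL_supr : ∀ (x : L) (A : Set Q), actL x (sSup A) = ⨆ a ∈ A, actL x a)
    (hactL_assoc : ∀ (x : L) (a b : Q), actL (actL x a) b = actL x (mul a b))
    (actR : Q → R → R)
    (hactR_supl : ∀ (A : Set Q) (y : R), actR (sSup A) y = ⨆ a ∈ A, actR a y)
    (hactR_supr : ∀ (a : Q) (Y : Set R), actR a (sSup Y) = ⨆ y ∈ Y, actR a y)
    (hactR_assoc : ∀ (a b : Q) (y : R), actR (mul a b) y = actR a (actR b y))
    (perp : L → R → Prop)
    (hL : ∀ (X : Set L) (y : R), perp (sSup X) y ↔ ∀ x ∈ X, perp x y)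
    (hR : ∀ (x : L) (Y : Set R), perp x (sSup Y) ↔ ∀ y ∈ Y, perp x y) :
    ((∀ (x : L) (a : Q),
        rorth perp (actL x a) = sSup {y : R | actR a y ≤ rorth perp x}) ↔
      (∀ (x : L) (y : R) (a : Q), perp (actL x a) y ↔ perp x (actR a y))) ∧
    ((∀ (y : R) (a : Q),
        lorth perp (actR a y) = sSup {z : L | actL z a ≤ lorth perp y}) ↔
      (∀ (x : L) (y : R) (a : Q), perp (actL x a) y ↔ perp x (actR a y))) := by
  have hr (x : L) (y : R) : perp x y ↔ y ≤ rorth perp x :=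
    IsSupPred.iff_le (P := fun y => perp x y) (hR x) y
  have hl (x : L) (y : R) : perp x y ↔ x ≤ lorth perp y :=
    IsSupPred.iff_le (P := fun x => perp x y) (fun X => hL X y) x
  have key1 (x : L) (a : Q) :
      rorth perp (actL x a) = sSup {y : R | actR a y ≤ rorth perp x} ↔
        ∀ y, perp (actL x a) y ↔ perp x (actR a y) := by
    simp only [hr x]
    exact IsSupPred.sSup_eq_iff (hR (actL x a)) (isSupPred_map_le (hactR_supr a) _)
  have key2 (y : R) (a : Q) :
      lorth perp (actR a y) = sSup {z : L | actL z a ≤ lorth perp y} ↔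
        ∀ x, perp x (actR a y) ↔ perp (actL x a) y := by
    simp only [hl _ y]
    exact IsSupPred.sSup_eq_iff (fun X => hL X (actR a y))
      (isSupPred_map_le (fun X => hactL_supl X a) _)
  simp only [key1, key2]
  exact ⟨⟨fun h x y a => h x a y, fun h x a y => h x y a⟩,
    ⟨fun h x y a => (h y a x).symm, fun h y a x => (h x y a).symm⟩⟩
end

section
/- Let Q be a quantale and ⊥ a 2-form over Q between a right Q-module L and a left Q-module R (i.e., x • a ⊥ y iff x ⊥ a • y for all x, y, a). Then the closure operators x ↦ ⊥(x^⊥) on L and y ↦ (⊥y)^⊥ on R are nuclei of Q-modules: (⊥(x^⊥)) • a ≤ ⊥((x • a)^⊥) for all x ∈ L, a ∈ Q, and a • ((⊥y)^⊥) ≤ (⊥(a • y))^⊥ for all y ∈ R, a ∈ Q. -/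
theorem stmt_15 {Q L R : Type*} [CompleteLattice Q] [CompleteLattice L]
    [CompleteLattice R]
    (mul : Q → Q → Q)
    (hmul_assoc : ∀ a b c : Q, mul (mul a b) c = mul a (mul b c))
    (hmul_supl : ∀ (A : Set Q) (b : Q), mul (sSup A) b = ⨆ a ∈ A, mul a b)
    (hmul_supr : ∀ (a : Q) (B : Set Q), mul a (sSup B) = ⨆ b ∈ B, mul a b)
    (actL : L → Q → L)
    (hactL_supl : ∀ (X : Set L) (a : Q), actL (sSup X) a = ⨆ x ∈ X, actL x a)
    (hactL_supr : ∀ (x : L) (A : Set Q), actL x (sSup A) = ⨆ a ∈ A, actL x a)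
    (hactL_assoc : ∀ (x : L) (a b : Q), actL (actL x a) b = actL x (mul a b))
    (actR : Q → R → R)
    (hactR_supl : ∀ (A : Set Q) (y : R), actR (sSup A) y = ⨆ a ∈ A, actR a y)
    (hactR_supr : ∀ (a : Q) (Y : Set R), actR a (sSup Y) = ⨆ y ∈ Y, actR a y)
    (hactR_assoc : ∀ (a b : Q) (y : R), actR (mul a b) y = actR a (actR b y))
    (perp : L → R → Prop)
    (hL : ∀ (X : Set L) (y : R), perp (sSup X) y ↔ ∀ x ∈ X, perp x y)
    (hR : ∀ (x : L) (Y : Set R), perp x (sSup Y) ↔ ∀ y ∈ Y, perp x y)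
    (hbal : ∀ (x : L) (y : R) (a : Q), perp (actL x a) y ↔ perp x (actR a y)) :
    (∀ (x : L) (a : Q),
      actL (lorth perp (rorth perp x)) a ≤ lorth perp (rorth perp (actL x a))) ∧
    (∀ (y : R) (a : Q),
      actR a (rorth perp (lorth perp y)) ≤ rorth perp (lorth perp (actR a y))) := by
  have hx : ∀ x, perp x (rorth perp x) := fun x => (hR _ _).2 fun _ h => h
  have hy : ∀ y, perp (lorth perp y) y := fun y => (hL _ _).2 fun _ h => h
  constructor
  · intro x a
    refine le_sSup ((hbal _ _ _).2 ?_)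
    -- The double orthogonal of `x` is orthogonal to every element that `x` is orthogonal to.
    exact (hR _ _).1 (hy (rorth perp x)) _ ((hbal _ _ _).1 (hx _))
  · intro y a
    refine le_sSup ((hbal _ _ _).1 ?_)
    exact (hL _ _).1 (hx (lorth perp y)) _ ((hbal _ _ _).2 (hy _))
end

section
/- Let Q be a quantale, ⊥ a 2-form over Q between a right Q-module L and a left Q-module R, and let x ∈ L and y ∈ R be generators (every element of L is of the form x • a and every element of R is of the form b • y, for a, b ∈ Q). Put n = orth(x,y) = sSup {a ∈ Q | x ⊥ a • y}. Then for all a, b ∈ Q: a * b ≤ n if and only if x • a ⊥ b • y. (Hence the surjective module homomorphisms a ↦ x • a and b ↦ b • y constitute a Q-orthoquotient from the 2-form φ_n(a,b) := [a*b ≤ n] on Q × Q onto ⊥.) -/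
/-!
For fixed `x` and `y`, the predicate `c ↦ x ⊥ c • y` turns suprema in `Q` into conjunctions, because
the left action preserves suprema in `Q` and `⊥` does so in `R`. It therefore holds at
`n = sSup {c | x ⊥ c • y}` and is inherited downwards, so `c ≤ n ↔ x ⊥ c • y`. Taking `c = a * b`
and rewriting `x ⊥ (a * b) • y` as `x ⊥ a • (b • y)`, then by balance as `x • a ⊥ b • y`, gives the
result.
-/

theorem stmt_16 {Q L R : Type*} [CompleteLattice Q] [CompleteLattice L]
    [CompleteLattice R]
    (mul : Q → Q → Q)
    (hmul_assoc : ∀ a b c : Q, mul (mul a b) c = mul a (mul b c))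
    (hmul_supl : ∀ (A : Set Q) (b : Q), mul (sSup A) b = ⨆ a ∈ A, mul a b)
    (hmul_supr : ∀ (a : Q) (B : Set Q), mul a (sSup B) = ⨆ b ∈ B, mul a b)
    (actL : L → Q → L)
    (hactL_supl : ∀ (X : Set L) (a : Q), actL (sSup X) a = ⨆ x ∈ X, actL x a)
    (hactL_supr : ∀ (x : L) (A : Set Q), actL x (sSup A) = ⨆ a ∈ A, actL x a)
    (hactL_assoc : ∀ (x : L) (a b : Q), actL (actL x a) b = actL x (mul a b))
    (actR : Q → R → R)
    (hactR_supl : ∀ (A : Set Q) (y : R), actR (sSup A) y = ⨆ a ∈ A, actR a y)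
    (hactR_supr : ∀ (a : Q) (Y : Set R), actR a (sSup Y) = ⨆ y ∈ Y, actR a y)
    (hactR_assoc : ∀ (a b : Q) (y : R), actR (mul a b) y = actR a (actR b y))
    (perp : L → R → Prop)
    (hL : ∀ (X : Set L) (y : R), perp (sSup X) y ↔ ∀ x ∈ X, perp x y)
    (hR : ∀ (x : L) (Y : Set R), perp x (sSup Y) ↔ ∀ y ∈ Y, perp x y)
    (hbal : ∀ (x : L) (y : R) (a : Q), perp (actL x a) y ↔ perp x (actR a y))
    (x : L) (y : R)
    (hgx : ∀ l : L, ∃ a : Q, actL x a = l)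
    (hgy : ∀ r : R, ∃ b : Q, actR b y = r) :
    ∀ a b : Q, mul a b ≤ sSup {c : Q | perp x (actR c y)} ↔
      perp (actL x a) (actR b y) := by
  have hsup : ∀ A : Set Q, perp x (actR (sSup A) y) ↔ ∀ c ∈ A, perp x (actR c y) := by
    intro A
    rw [hactR_supl, ← sSup_image, hR]
    exact Set.forall_mem_image
  intro a b
  rw [hbal, ← hactR_assoc]
  refine ⟨fun h => ?_, fun h => le_sSup h⟩
  -- Downward closure: `a * b ≤ n` makes `n` the supremum of the pair `{a * b, n}`.
  have hpair := hsup {mul a b, sSup {c : Q | perp x (actR c y)}}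
  rw [sSup_pair, sup_eq_right.mpr h] at hpair
  exact hpair.mp ((hsup _).mpr fun _ hc => hc) _ (Set.mem_insert _ _)
end

section
/- Let Q be a unital quantale, ⊥ a 2-form over Q between a right Q-module L and a left Q-module R, and let x ∈ L and y ∈ R be generators. Put orth(x,y) = sSup {a ∈ Q | x ⊥ a • y} and ann(y) = sSup {a ∈ Q | a • y = ⊥}. Then ⊥ is dense on the right (⊤ ⊥ r implies r = ⊥, for r ∈ R) if and only if ann(y) is the greatest left-sided element of Q below orth(x,y), i.e., ann(y) ≤ orth(x,y) and every left-sided a ∈ Q with a ≤ orth(x,y) satisfies a ≤ ann(y). -/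
/-!
Since `x` generates `L`, write `⊤ = x • t`. If `a` is left-sided and `x ⊥ a • y`, then
`t * a ≤ ⊤ * a ≤ a` gives `x ⊥ (t * a) • y`, and balancedness turns this into `⊤ ⊥ a • y`;
density on the right then puts `a` below `ann(y)`. Conversely, since `y` generates `R`, write
`r = b • y`. If `⊤ ⊥ r`, then `⊤ * b` is a left-sided element below `orth(x, y)`, so
`b = e * b ≤ ⊤ * b ≤ ann(y)`, and therefore `r = b • y = ⊥`. The first direction uses that the
supremum `orth(x, y)` belongs to the set it is taken over, the second that `ann(y)` does.
-/

lemma monotone_of_map_sSup {A B : Type*} [CompleteLattice A] [CompleteLattice B] {f : A → B}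
    (hf : ∀ S : Set A, f (sSup S) = ⨆ a ∈ S, f a) : Monotone f := by
  intro a b hab
  have h := hf {a, b}
  rw [sSup_pair, sup_eq_right.mpr hab] at h
  rw [h]
  exact le_biSup f (Set.mem_insert a {b})

/-- Applied to the predicates `x ⊥ ·` and `· ⊥ r`: a 2-form is antitone in each variable. -/
lemma of_le_of_sSup_iff {A : Type*} [CompleteLattice A] {P : A → Prop}
    (hP : ∀ S : Set A, P (sSup S) ↔ ∀ a ∈ S, P a) {a b : A} (hab : a ≤ b) (hb : P b) : P a := by
  have h := hP {a, b}
  rw [sSup_pair, sup_eq_right.mpr hab] at h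
  exact h.mp hb a (Set.mem_insert a {b})

theorem stmt_17 {Q L R : Type*} [CompleteLattice Q] [CompleteLattice L]
    [CompleteLattice R]
    (mul : Q → Q → Q) (e : Q)
    (hmul_assoc : ∀ a b c : Q, mul (mul a b) c = mul a (mul b c))
    (hel : ∀ a : Q, mul e a = a)
    (her : ∀ a : Q, mul a e = a)
    (hmul_supl : ∀ (A : Set Q) (b : Q), mul (sSup A) b = ⨆ a ∈ A, mul a b)
    (hmul_supr : ∀ (a : Q) (B : Set Q), mul a (sSup B) = ⨆ b ∈ B, mul a b)
    (actL : L → Q → L)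
    (hactL_supl : ∀ (X : Set L) (a : Q), actL (sSup X) a = ⨆ x ∈ X, actL x a)
    (hactL_supr : ∀ (x : L) (A : Set Q), actL x (sSup A) = ⨆ a ∈ A, actL x a)
    (hactL_assoc : ∀ (x : L) (a b : Q), actL (actL x a) b = actL x (mul a b))
    (actR : Q → R → R)
    (hactR_supl : ∀ (A : Set Q) (y : R), actR (sSup A) y = ⨆ a ∈ A, actR a y)
    (hactR_supr : ∀ (a : Q) (Y : Set R), actR a (sSup Y) = ⨆ y ∈ Y, actR a y)
    (hactR_assoc : ∀ (a b : Q) (y : R), actR (mul a b) y = actR a (actR b y))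
    (perp : L → R → Prop)
    (hL : ∀ (X : Set L) (y : R), perp (sSup X) y ↔ ∀ x ∈ X, perp x y)
    (hR : ∀ (x : L) (Y : Set R), perp x (sSup Y) ↔ ∀ y ∈ Y, perp x y)
    (hbal : ∀ (x : L) (y : R) (a : Q), perp (actL x a) y ↔ perp x (actR a y))
    (x : L) (y : R)
    (hgx : ∀ l : L, ∃ a : Q, actL x a = l)
    (hgy : ∀ r : R, ∃ b : Q, actR b y = r) :
    (∀ r : R, perp ⊤ r → r = ⊥) ↔
      (sSup {a : Q | actR a y = ⊥} ≤ sSup {a : Q | perp x (actR a y)} ∧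
       ∀ a : Q, mul ⊤ a ≤ a → a ≤ sSup {c : Q | perp x (actR c y)} →
         a ≤ sSup {b : Q | actR b y = ⊥}) := by
  have mul_mono (b : Q) : Monotone fun a => mul a b := monotone_of_map_sSup fun A => hmul_supl A b
  have act_mono : Monotone fun a => actR a y := monotone_of_map_sSup fun A => hactR_supl A y
  have perp_orth : perp x (actR (sSup {a : Q | perp x (actR a y)}) y) := by
    rw [hactR_supl, ← sSup_image, hR]
    rintro _ ⟨a, ha, rfl⟩
    exact ha
  have ann_act : actR (sSup {a : Q | actR a y = ⊥}) y = ⊥ := by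
    rw [hactR_supl]
    exact le_bot_iff.mp (iSup₂_le fun a ha => le_of_eq ha)
  constructor
  · intro hdense
    refine ⟨sSup_le_sSup fun a ha => ?_, fun a hleft ha => le_sSup (hdense _ ?_)⟩
    · rw [Set.mem_ofPred_eq] at ha ⊢
      rw [ha, ← sSup_empty, hR]
      simp
    · obtain ⟨t, ht⟩ := hgx ⊤
      rw [← ht, hbal, ← hactR_assoc]
      have hta : mul t a ≤ a := (mul_mono a le_top).trans hleft
      exact of_le_of_sSup_iff (hR x) (act_mono (hta.trans ha)) perp_orth
  · rintro ⟨-, hgreatest⟩ r hr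
    obtain ⟨b, rfl⟩ := hgy r
    have hleft : mul ⊤ (mul ⊤ b) ≤ mul ⊤ b := by
      rw [← hmul_assoc]
      exact mul_mono b le_top
    have horth : perp x (actR (mul ⊤ b) y) := by
      rw [hactR_assoc, ← hbal]
      exact of_le_of_sSup_iff (P := fun l => perp l (actR b y)) (fun X => hL X _) le_top hr
    have hb : b ≤ mul ⊤ b := (hel b).ge.trans (mul_mono b le_top)
    have hann := hb.trans (hgreatest _ hleft (le_sSup horth))
    exact le_bot_iff.mp ((act_mono hann).trans ann_act.le)
end

section
/- Let Q be an involutive quantale, (M, ⊥) an involutive left Q-module, and x ∈ M. Then for all a, b ∈ Q: a* * b ≤ orth(x,x) if and only if a • x ⊥ b • x, where orth(x,x) = sSup {c ∈ Q | x ⊥ c • x}. (Hence the map a ↦ a • x is an orthomorphism from the symmetric 2-form (a,b) ↦ [a* * b ≤ orth(x,x)] on Q to ⊥, and when x is a generator it is a surjective homomorphism of involutive left Q-modules.) -/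
/-! Moving `a` across the form turns `a • x ⊥ b • x` into `x ⊥ (a* * b) • x`, so the claim says that
the set of all `c` with `x ⊥ c • x` is the principal down-set generated by its supremum. This holds
because both the action and the form turn suprema into conjunctions:
`x ⊥ (sSup A) • x` exactly when `x ⊥ a • x` for all `a ∈ A`. -/

theorem stmt_19 {Q M : Type*} [CompleteLattice Q] [CompleteLattice M]
    (mul : Q → Q → Q)
    (hmul_assoc : ∀ a b c : Q, mul (mul a b) c = mul a (mul b c))
    (hmul_supl : ∀ (A : Set Q) (b : Q), mul (sSup A) b = ⨆ a ∈ A, mul a b)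
    (hmul_supr : ∀ (a : Q) (B : Set Q), mul a (sSup B) = ⨆ b ∈ B, mul a b)
    (invol : Q → Q)
    (hinvol_invol : ∀ a : Q, invol (invol a) = a)
    (hinvol_mul : ∀ a b : Q, invol (mul a b) = mul (invol b) (invol a))
    (hinvol_sup : ∀ A : Set Q, invol (sSup A) = ⨆ a ∈ A, invol a)
    (smul : Q → M → M)
    (hact_supl : ∀ (A : Set Q) (x : M), smul (sSup A) x = ⨆ a ∈ A, smul a x)
    (hact_supr : ∀ (a : Q) (X : Set M), smul a (sSup X) = ⨆ x ∈ X, smul a x)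
    (hact_assoc : ∀ (a b : Q) (x : M), smul (mul a b) x = smul a (smul b x))
    (perp : M → M → Prop)
    (hL : ∀ (X : Set M) (y : M), perp (sSup X) y ↔ ∀ x ∈ X, perp x y)
    (hR : ∀ (x : M) (Y : Set M), perp x (sSup Y) ↔ ∀ y ∈ Y, perp x y)
    (hsym : ∀ x y : M, perp x y ↔ perp y x)
    (hinv : ∀ (a : Q) (x y : M), perp (smul (invol a) x) y ↔ perp x (smul a y))
    (x : M) :
    ∀ a b : Q, mul (invol a) b ≤ sSup {c : Q | perp x (smul c x)} ↔
      perp (smul a x) (smul b x) := by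
  intro a b
  have hsup : ∀ A : Set Q, perp x (smul (sSup A) x) ↔ ∀ c ∈ A, perp x (smul c x) := by
    intro A
    rw [hact_supl, ← sSup_image, hR, Set.forall_mem_image]
  have hmove : perp (smul a x) (smul b x) ↔ perp x (smul (mul (invol a) b) x) := by
    rw [hact_assoc, ← hinv (invol a), hinvol_invol]
  rw [hmove]
  refine ⟨fun h => ?_, fun h => le_sSup h⟩
  -- Downward closure: write the supremum `s` as `sSup {a* * b, s}`.
  have hs := (hsup {c : Q | perp x (smul c x)}).2 fun c hc => hc
  rw [← sup_eq_right.2 h, ← sSup_pair, hsup] at hs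
  exact hs _ (Set.mem_insert _ _)
end
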